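/- If A is a thin set of natural numbers with 1 ∉ A, then the set of multiples M(A) possesses an asymptotic density, and this density is strictly less than 1. -/

import Mathlib

open Filter

open scoped Classical in
noncomputable def countIn (A : Set ℕ) (x : ℕ) : ℕ :=
  ((Finset.Icc 1 x).filter (fun n => n ∈ A)).card

/-- `A ⊆ ℕ` has asymptotic density `δ`. -/
def HasDensity (A : Set ℕ) (δ : ℝ) : Prop :=
  Tendsto (fun x : ℕ => (countIn A x : ℝ) / x) atTop (nhds δ)

/-- `A` is thin: `∑_{a ∈ A} 1/a < ∞`. -/
def Thin (A : Set ℕ) : Prop := Summable (fun a : A => (1 : ℝ) / a)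

/-- The set of multiples of `A`: positive integers with at least one divisor in `A`. -/
def setOfMultiples (A : Set ℕ) : Set ℕ := {n : ℕ | 0 < n ∧ ∃ a ∈ A, a ∣ n}

lemma thin_tail (A : Set ℕ) (hA : Thin A) (ε : ℝ) (hε : 0 < ε) :
    ∃ N : ℕ, ∀ s : Finset ℕ, (∀ a ∈ s, a ∈ A ∧ N ≤ a) → ∑ a ∈ s, (1 : ℝ) / a ≤ ε := by
  have h : Summable (A.indicator (fun a : ℕ => (1 : ℝ) / a)) :=
    summable_subtype_iff_indicator.mp hA
  obtain ⟨s, hs⟩ := summable_iff_vanishing_norm.mp h ε hε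
  refine ⟨s.sup id + 1, fun t ht => ?_⟩
  have hd : Disjoint t s := by
    rw [Finset.disjoint_left]
    intro a hat has
    have h1 := (ht a hat).2
    have h2 : id a ≤ s.sup id := Finset.le_sup has
    simp only [id] at h2
    omega
  have h3 := hs t hd
  have h4 : ∑ a ∈ t, A.indicator (fun a : ℕ => (1 : ℝ) / a) a = ∑ a ∈ t, (1 : ℝ) / a :=
    Finset.sum_congr rfl fun a ha => Set.indicator_of_mem (ht a ha).1 _
  rw [h4] at h3
  exact (le_abs_self _).trans h3.le

open scoped Classical in
lemma countIn_eq_count (A : Set ℕ) (x : ℕ) :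
    countIn A x = Nat.count (fun n => n + 1 ∈ A) x := by
  induction x with
  | zero => simp [countIn]
  | succ x ih =>
    rw [Nat.count_succ, ← ih]
    unfold countIn
    rw [← Finset.insert_Icc_right_eq_Icc_add_one (by omega), Finset.filter_insert]
    split_ifs with h
    · rw [Finset.card_insert_of_notMem (by simp)]
    · simp

open scoped Classical in
lemma count_periodic (p : ℕ → Prop) (L : ℕ) (hp : ∀ n, p (L + n) ↔ p n) (q r : ℕ) :
    Nat.count p (L * q + r) = q * Nat.count p L + Nat.count p r := by
  induction q with
  | zero => simp
  | succ q ih =>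
    have : L * (q + 1) + r = L + (L * q + r) := by ring
    rw [this, Nat.count_add]
    simp only [hp]
    rw [ih]; ring

lemma hasDensity_periodic (A : Set ℕ) (L : ℕ) (hL : 0 < L)
    (hp : ∀ n, L + n + 1 ∈ A ↔ n + 1 ∈ A) : ∃ δ, HasDensity A δ := by
  classical
  set c := Nat.count (fun n => n + 1 ∈ A) L with hc
  refine ⟨c / L, ?_⟩
  have hL' : (0 : ℝ) < L := by exact_mod_cast hL
  have key : ∀ x : ℕ, |(countIn A x : ℝ) - x * (c / L)| ≤ 2 * L := by
    intro x
    have h1 : countIn A x = (x / L) * c + Nat.count (fun n => n + 1 ∈ A) (x % L) := by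
      rw [countIn_eq_count, ← count_periodic _ L hp, Nat.div_add_mod]
    have h2 : Nat.count (fun n => n + 1 ∈ A) (x % L) ≤ L :=
      (Nat.count_le _).trans (Nat.mod_lt _ hL).le
    have h3 : (c : ℝ) ≤ L := by exact_mod_cast (Nat.count_le _ : c ≤ L)
    have h4 : (x : ℝ) = L * (x / L : ℕ) + (x % L : ℕ) := by exact_mod_cast (Nat.div_add_mod x L).symm
    have h5 : ((x % L : ℕ) : ℝ) ≤ L := by exact_mod_cast (Nat.mod_lt x hL).le
    have h6 : (0 : ℝ) ≤ ((x % L : ℕ) : ℝ) := by positivity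
    have h7 : (x : ℝ) * (c / L) = (x / L : ℕ) * c + (x % L : ℕ) * (c / L) := by
      rw [h4]
      have : ((L * (x / L) + x % L) / L : ℕ) = x / L := by rw [Nat.div_add_mod]
      field_simp
    have h8 : (c : ℝ) / L ≤ 1 := by rw [div_le_one hL']; exact h3
    have h9 : 0 ≤ (c : ℝ) / L := by positivity
    have h10 : ((x % L : ℕ) : ℝ) * (c / L) ≤ L := by nlinarith
    have h11 : 0 ≤ ((x % L : ℕ) : ℝ) * (c / L) := by positivity
    have h12 : (Nat.count (fun n => n + 1 ∈ A) (x % L) : ℝ) ≤ L := by exact_mod_cast h2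
    have h13 : (0 : ℝ) ≤ (Nat.count (fun n => n + 1 ∈ A) (x % L) : ℝ) := by positivity
    rw [h7, h1]
    push_cast
    rw [abs_le]
    constructor <;> linarith
  unfold HasDensity
  rw [tendsto_iff_dist_tendsto_zero]
  have h0 : Tendsto (fun x : ℕ => (2 * L : ℝ) / x) atTop (nhds 0) :=
    tendsto_const_div_atTop_nhds_zero_nat _
  refine tendsto_of_tendsto_of_tendsto_of_le_of_le' tendsto_const_nhds h0
    (Eventually.of_forall fun x => dist_nonneg) ?_
  filter_upwards [eventually_gt_atTop 0] with x hx
  have hx' : (0 : ℝ) < x := by exact_mod_cast hx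
  rw [Real.dist_eq, le_div_iff₀ hx']
  calc |(countIn A x : ℝ) / x - c / L| * x = |((countIn A x : ℝ) / x - c / L) * x| := by
        rw [abs_mul, abs_of_pos hx']
    _ = |(countIn A x : ℝ) - x * (c / L)| := by
        congr 1; field_simp
    _ ≤ _ := key x

lemma finite_density (A : Set ℕ) (N : ℕ) :
    ∃ δ, HasDensity (setOfMultiples {a | a ∈ A ∧ a < N}) δ := by
  refine hasDensity_periodic _ N.factorial N.factorial_pos fun n => ?_
  simp only [setOfMultiples, Set.mem_setOf_eq]
  refine and_congr (by simp) (exists_congr fun a => and_congr_right fun h => ?_)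
  rcases Nat.eq_zero_or_pos a with rfl | ha
  · simp
  · rw [add_assoc]
    exact (Nat.dvd_add_right (Nat.dvd_factorial ha h.2.le))

lemma countIn_mono {A B : Set ℕ} (h : A ⊆ B) (x : ℕ) : countIn A x ≤ countIn B x := by
  classical
  unfold countIn
  apply Finset.card_le_card
  intro n
  simp only [Finset.mem_filter]
  exact fun hn => ⟨hn.1, h hn.2⟩

open scoped Classical in
lemma countIn_le_add (A : Set ℕ) (N x : ℕ) : countIn (setOfMultiples A) x ≤
    countIn (setOfMultiples {a | a ∈ A ∧ a < N}) x +
      ∑ a ∈ (Finset.Icc 1 x).filter (fun a => a ∈ A ∧ N ≤ a), x / a := by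
  unfold countIn
  have h : ∀ a, x / a = ((Finset.Ioc 0 x).filter (fun n => a ∣ n)).card := fun a =>
    (Nat.Ioc_filter_dvd_card_eq_div x a).symm
  simp only [h]
  refine le_trans (Finset.card_le_card ?_) ((Finset.card_union_le _ _).trans
    (Nat.add_le_add_left Finset.card_biUnion_le _))
  intro n
  simp only [Finset.mem_filter, Finset.mem_union, Finset.mem_biUnion, setOfMultiples,
    Set.mem_setOf_eq, Finset.mem_Icc, Finset.mem_Ioc]
  rintro ⟨hn, hn0, a, ha, hd⟩
  by_cases h : a < N
  · exact Or.inl ⟨hn, hn0, a, ⟨ha, h⟩, hd⟩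
  · have := Nat.le_of_dvd hn0 hd
    have := Nat.pos_of_dvd_of_pos hd hn0
    exact Or.inr ⟨a, ⟨⟨by omega, by omega⟩, ha, by omega⟩, ⟨hn0, hn.2⟩, hd⟩

lemma exists_density (A : Set ℕ) (hA : Thin A) : ∃ δ, HasDensity (setOfMultiples A) δ := by
  classical
  unfold HasDensity
  apply cauchySeq_tendsto_of_complete
  rw [Metric.cauchySeq_iff]
  intro ε hε
  obtain ⟨N, hN⟩ := thin_tail A hA (ε / 4) (by positivity)
  obtain ⟨d, hd⟩ := finite_density A N
  obtain ⟨K, hK⟩ := Metric.cauchySeq_iff.mp hd.cauchySeq (ε / 4) (by positivity)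
  have close : ∀ x : ℕ, 0 < x →
      |(countIn (setOfMultiples A) x : ℝ) / x -
        countIn (setOfMultiples {a | a ∈ A ∧ a < N}) x / x| ≤ ε / 4 := by
    intro x hx
    have hx' : (0 : ℝ) < x := by exact_mod_cast hx
    have hm : countIn (setOfMultiples {a | a ∈ A ∧ a < N}) x ≤ countIn (setOfMultiples A) x := by
      apply countIn_mono
      rintro n ⟨h0, a, ha, h⟩
      exact ⟨h0, a, ha.1, h⟩
    have hm' : (countIn (setOfMultiples {a | a ∈ A ∧ a < N}) x : ℝ) ≤
      countIn (setOfMultiples A) x := by exact_mod_cast hm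
    have h1 : (countIn (setOfMultiples A) x : ℝ) ≤
        countIn (setOfMultiples {a | a ∈ A ∧ a < N}) x +
        ∑ a ∈ (Finset.Icc 1 x).filter (fun a => a ∈ A ∧ N ≤ a), ((x / a : ℕ) : ℝ) := by
      exact_mod_cast countIn_le_add A N x
    have h2 : ∑ a ∈ (Finset.Icc 1 x).filter (fun a => a ∈ A ∧ N ≤ a), ((x / a : ℕ) : ℝ) ≤
        x * (ε / 4) := by
      calc _ ≤ ∑ a ∈ (Finset.Icc 1 x).filter (fun a => a ∈ A ∧ N ≤ a), (x : ℝ) * (1 / a) := by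
            refine Finset.sum_le_sum fun a _ => ?_
            rw [mul_one_div]
            exact Nat.cast_div_le
        _ = x * ∑ a ∈ (Finset.Icc 1 x).filter (fun a => a ∈ A ∧ N ≤ a), (1 : ℝ) / a := by
            rw [Finset.mul_sum]
        _ ≤ _ := by
            refine mul_le_mul_of_nonneg_left (hN _ fun a ha => ?_) hx'.le
            exact (Finset.mem_filter.mp ha).2
    rw [← sub_div, abs_of_nonneg (div_nonneg (by linarith) hx'.le), div_le_iff₀ hx']
    linarith
  refine ⟨K + 1, fun m hm n hn => ?_⟩
  have h1 := close m (by omega)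
  have h2 := close n (by omega)
  have h3 := hK m (by omega) n (by omega)
  rw [Real.dist_eq] at *
  rw [abs_le] at h1 h2
  rw [abs_lt] at *
  constructor <;> linarith [h1.1, h1.2, h2.1, h2.2, h3.1, h3.2]

lemma card_modEq_bounds (x r v : ℕ) (hr : 0 < r) :
    (x : ℝ) / r - 1 ≤ ((Finset.Icc 1 x).filter (fun n => n ≡ v [MOD r])).card ∧
    (((Finset.Icc 1 x).filter (fun n => n ≡ v [MOD r])).card : ℝ) ≤ (x : ℝ) / r + 1 := by
  have h := Nat.Ioc_filter_modEq_card 0 x hr v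
  have hI : Finset.Icc 1 x = Finset.Ioc 0 x := by ext; simp [Nat.succ_le_iff]
  rw [hI]
  set c := ((Finset.Ioc 0 x).filter (fun n => n ≡ v [MOD r])).card
  have hr' : (0 : ℚ) < r := by exact_mod_cast hr
  have e : ((x : ℚ) - v) / r = x / r + ((0 : ℕ) - v : ℚ) / r := by push_cast; ring
  have hx : (0 : ℚ) ≤ x / r := by positivity
  have f1 := Int.floor_le (((x : ℚ) - v) / r)
  have f2 := Int.lt_floor_add_one (((x : ℚ) - v) / r)
  have f3 := Int.floor_le ((((0 : ℕ) : ℚ) - v) / r)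
  have f4 := Int.lt_floor_add_one ((((0 : ℕ) : ℚ) - v) / r)
  have hq : (c : ℚ) = max ((⌊((x : ℚ) - v) / r⌋ : ℚ) - ⌊(((0 : ℕ) : ℚ) - v) / r⌋) 0 := by
    exact_mod_cast h
  have g1 : (x : ℚ) / r - 1 ≤ c := by
    rw [hq]; refine le_trans ?_ (le_max_left _ _); linarith
  have g2 : (c : ℚ) ≤ (x : ℚ) / r + 1 := by
    rw [hq]; refine max_le ?_ ?_ <;> linarith
  constructor
  · have := (Rat.cast_le (K := ℝ)).mpr g1
    push_cast at this
    exact this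
  · have := (Rat.cast_le (K := ℝ)).mpr g2
    push_cast at this
    exact this

lemma card_modEq_dvd (x L a : ℕ) (hL : 0 < L) (ha : 0 < a) :
    ((((Finset.Icc 1 x).filter (fun n => n ≡ 1 [MOD L])).filter (fun n => a ∣ n)).card : ℝ) ≤
      (x : ℝ) / L * (1 / a) + 1 := by
  set S := ((Finset.Icc 1 x).filter (fun n => n ≡ 1 [MOD L])).filter (fun n => a ∣ n) with hS
  rcases S.eq_empty_or_nonempty with h | ⟨v, hv⟩
  · rw [h]; simp; positivity
  · have hv' := hv
    simp only [hS, Finset.mem_filter] at hv'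
    have hc : Nat.Coprime L a := by
      have h1 : Nat.Coprime v L := by
        have := hv'.1.2.gcd_eq
        simpa [Nat.Coprime] using this
      exact (Nat.Coprime.coprime_dvd_left hv'.2 h1).symm
    have hsub : S ⊆ (Finset.Icc 1 x).filter (fun n => n ≡ v [MOD L * a]) := by
      intro n hn
      simp only [hS, Finset.mem_filter] at hn ⊢
      refine ⟨hn.1.1, (Nat.modEq_and_modEq_iff_modEq_mul hc).mp ⟨hn.1.2.trans hv'.1.2.symm, ?_⟩⟩
      exact ((Nat.modEq_zero_iff_dvd).mpr hn.2).trans ((Nat.modEq_zero_iff_dvd).mpr hv'.2).symm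
    have h1 : (S.card : ℝ) ≤ ((Finset.Icc 1 x).filter (fun n => n ≡ v [MOD L * a])).card := by
      exact_mod_cast Finset.card_le_card hsub
    refine h1.trans ((card_modEq_bounds x (L * a) v (by positivity)).2.trans (le_of_eq ?_))
    push_cast
    field_simp

open scoped Classical in
lemma countIn_bound (A : Set ℕ) (h1 : 1 ∉ A) (N x : ℕ) :
    countIn (setOfMultiples A) x + ((Finset.Icc 1 x).filter
      (fun n => n ≡ 1 [MOD N.factorial])).card ≤ x +
    ∑ a ∈ (Finset.Icc 1 x).filter (fun a => a ∈ A ∧ N ≤ a),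
      (((Finset.Icc 1 x).filter (fun n => n ≡ 1 [MOD N.factorial])).filter
        (fun n => a ∣ n)).card := by
  unfold countIn
  rw [← Finset.card_union_add_card_inter]
  refine Nat.add_le_add ?_ (le_trans (Finset.card_le_card ?_) Finset.card_biUnion_le)
  · refine (Finset.card_le_card (Finset.union_subset (Finset.filter_subset _ _)
      (Finset.filter_subset _ _))).trans ?_
    simp
  · intro n
    simp only [Finset.mem_filter, Finset.mem_inter, Finset.mem_biUnion, setOfMultiples,
      Set.mem_setOf_eq, Finset.mem_Icc]
    rintro ⟨⟨hn, hn0, a, ha, hd⟩, -, hm⟩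
    have ha1 := Nat.le_of_dvd hn0 hd
    have ha0 := Nat.pos_of_dvd_of_pos hd hn0
    refine ⟨a, ⟨⟨ha0, by omega⟩, ha, ?_⟩, ⟨hn, hm⟩, hd⟩
    by_contra hlt
    have hdf : a ∣ N.factorial := Nat.dvd_factorial ha0 (by omega)
    have : a ∣ 1 := ((hm.of_dvd hdf).dvd_iff dvd_rfl).mp hd
    exact h1 (Nat.dvd_one.mp this ▸ ha)

/-- If `A` is thin and `1 ∉ A`, then the set of multiples of `A` has an asymptotic
density which is strictly less than `1`. -/
theorem thin_setOfMultiples_density_lt_one (A : Set ℕ) (hA : Thin A) (h1 : 1 ∉ A) :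
    ∃ δ : ℝ, HasDensity (setOfMultiples A) δ ∧ δ < 1 := by
  classical
  obtain ⟨δ, hδ⟩ := exists_density A hA
  refine ⟨δ, hδ, ?_⟩
  obtain ⟨N, hN⟩ := thin_tail A hA (1 / 4) (by norm_num)
  set L := N.factorial with hLdef
  have hL : 0 < L := N.factorial_pos
  have hL' : (0 : ℝ) < L := by exact_mod_cast hL
  obtain ⟨M, hM⟩ := thin_tail A hA (1 / (4 * L)) (by positivity)
  have bound : ∀ x : ℕ, 0 < x → (countIn (setOfMultiples A) x : ℝ) / x ≤
      1 - 1 / (2 * L) + (M + 1) / x := by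
    intro x hx
    have hx' : (0 : ℝ) < x := by exact_mod_cast hx
    set s := (Finset.Icc 1 x).filter (fun a => a ∈ A ∧ N ≤ a) with hs
    have b1 : (countIn (setOfMultiples A) x : ℝ) + ((Finset.Icc 1 x).filter
        (fun n => n ≡ 1 [MOD L])).card ≤ x +
        ∑ a ∈ s, ((((Finset.Icc 1 x).filter (fun n => n ≡ 1 [MOD L])).filter
        (fun n => a ∣ n)).card : ℝ) := by
      exact_mod_cast countIn_bound A h1 N x
    have b2 := (card_modEq_bounds x L 1 hL).1
    have b3 : ∑ a ∈ s, ((((Finset.Icc 1 x).filter (fun n => n ≡ 1 [MOD L])).filter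
        (fun n => a ∣ n)).card : ℝ) ≤ ∑ a ∈ s, ((x : ℝ) / L * (1 / a) + 1) := by
      refine Finset.sum_le_sum fun a ha => card_modEq_dvd x L a hL ?_
      simp only [hs, Finset.mem_filter, Finset.mem_Icc] at ha
      omega
    rw [Finset.sum_add_distrib, ← Finset.mul_sum] at b3
    have b4 : (x : ℝ) / L * ∑ a ∈ s, (1 : ℝ) / a ≤ (x : ℝ) / L * (1 / 4) := by
      refine mul_le_mul_of_nonneg_left (hN _ fun a ha => ?_) (by positivity)
      exact (Finset.mem_filter.mp ha).2
    have b5 : ∑ a ∈ s, (1 : ℝ) ≤ M + x * (1 / (4 * L)) := by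
      rw [← Finset.sum_filter_add_sum_filter_not s (fun a => a < M)]
      refine add_le_add ?_ ?_
      · have : (s.filter (fun a => a < M)).card ≤ M := by
          refine (Finset.card_le_card (t := Finset.range M) ?_).trans (by simp)
          intro a ha
          exact Finset.mem_range.mpr (Finset.mem_filter.mp ha).2
        simpa using (by exact_mod_cast this : ((s.filter (fun a => a < M)).card : ℝ) ≤ M)
      · calc ∑ a ∈ s.filter (fun a => ¬ a < M), (1 : ℝ)
            ≤ ∑ a ∈ s.filter (fun a => ¬ a < M), (x : ℝ) * (1 / a) := by
              refine Finset.sum_le_sum fun a ha => ?_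
              simp only [hs, Finset.mem_filter, Finset.mem_Icc] at ha
              have ha0 : (0 : ℝ) < a := by exact_mod_cast ha.1.1.1
              rw [mul_one_div, one_le_div ha0]
              exact_mod_cast ha.1.1.2
          _ = x * ∑ a ∈ s.filter (fun a => ¬ a < M), (1 : ℝ) / a := by rw [Finset.mul_sum]
          _ ≤ _ := by
              refine mul_le_mul_of_nonneg_left (hM _ fun a ha => ?_) hx'.le
              simp only [hs, Finset.mem_filter, Finset.mem_Icc] at ha
              exact ⟨ha.1.2.1, by omega⟩
    rw [div_le_iff₀ hx']
    have e1 : (1 - 1 / (2 * L) + (M + 1) / x) * (x : ℝ) = x - (x : ℝ) / L * (1 / 2) + M + 1 := by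
      field_simp
      ring
    have e2 : (x : ℝ) * (1 / (4 * L)) = (x : ℝ) / L * (1 / 4) := by field_simp
    rw [e1]
    rw [e2] at b5
    linarith
  have hlim : Tendsto (fun x : ℕ => (1 - 1 / (2 * L) + (M + 1) / x : ℝ)) atTop
      (nhds (1 - 1 / (2 * L) + 0)) :=
    tendsto_const_nhds.add (tendsto_const_div_atTop_nhds_zero_nat _)
  have hle : δ ≤ 1 - 1 / (2 * L) + 0 := by
    refine le_of_tendsto_of_tendsto hδ hlim ?_
    filter_upwards [eventually_gt_atTop 0] with x hx using bound x hx
  have : (0 : ℝ) < 1 / (2 * L) := by positivity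
  linarith
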